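/- Let Γ be an n-colored graph with vertex set V = V₁ ⊔ ⋯ ⊔ Vₙ (no edges within a color class) such that (1) every color class Vᵢ has at least 2 vertices, and (2) for every i and every choice of 2(n−1) vertices v¹,…,v^{2(n−1)} outside Vᵢ there exist two distinct vertices vᵢ, wᵢ ∈ Vᵢ adjacent to every v^j. Then the clique complex K(Γ) (whose p-simplices are the (p+1)-sets of pairwise adjacent vertices) is simply connected when n ≥ 3. -/

import Mathlib

/-- The geometric realization of the clique (flag) complex `K(Γ)` of a simple graph `Γ`:
formal convex combinations of vertices whose support is a clique, topologized as a subspace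
of the product `V → ℝ`. Its `p`-simplices are the `(p+1)`-sets of pairwise adjacent
vertices. -/
def CliqueComplex {V : Type*} (G : SimpleGraph V) : Type _ :=
  {f : V →₀ ℝ // (∀ v, 0 ≤ f v) ∧ (f.sum fun _ x => x) = 1 ∧
    G.IsClique (f.support : Set V)}

noncomputable instance {V : Type*} (G : SimpleGraph V) : TopologicalSpace (CliqueComplex G) :=
  TopologicalSpace.induced (fun f => (f.1 : V → ℝ)) Pi.topologicalSpace


namespace CliqueComplex

open scoped unitInterval

variable {V : Type*} {G : SimpleGraph V}

/-- The point of the realization given by a vertex. -/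
noncomputable def vtx (G : SimpleGraph V) (v : V) : CliqueComplex G :=
  ⟨Finsupp.single v 1, by
    intro w
    classical
    rw [Finsupp.single_apply]
    split_ifs <;> norm_num, by simp, by
    have h : ((Finsupp.single v (1 : ℝ)).support : Set V) ⊆ {v} := by
      intro w hw
      by_contra hc
      have hc' : w ≠ v := hc
      simp [hc'] at hw
    exact (Set.pairwise_singleton v G.Adj).mono h⟩

/-- The closed star of a vertex. -/
def star (G : SimpleGraph V) (v : V) : Set (CliqueComplex G) :=
  {f | G.IsClique (insert v (f.1.support : Set V))}

lemma supp_vtx (v : V) : ((vtx G v).1.support : Set V) = {v} := by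
  simp [vtx]

/-- Straight line from the vertex `v` to `f` in the closed star. -/
noncomputable def mix (v : V) (f : CliqueComplex G) (h : f ∈ star G v) (t : I) :
    CliqueComplex G :=
  ⟨(t : ℝ) • f.1 + (1 - (t : ℝ)) • Finsupp.single v 1, by
    intro w
    have h1 := f.2.1 w
    have h2 := (vtx G v).2.1 w
    have h3 := t.2.1
    have h4 : 0 ≤ 1 - (t : ℝ) := sub_nonneg.2 t.2.2
    exact add_nonneg (mul_nonneg h3 h1) (mul_nonneg h4 h2), by
    have h1 := f.2.2.1
    rw [Finsupp.sum_add_index' (by simp) (by simp), Finsupp.sum_smul_index (by simp),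
      Finsupp.sum_smul_index (by simp), ← Finsupp.mul_sum, h1]
    simp, by
    classical
    refine Set.Pairwise.mono ?_ h
    intro w hw
    by_contra hc
    simp only [Set.mem_insert_iff, not_or, Finset.mem_coe, Finsupp.mem_support_iff, not_not] at hc
    simp [hc.2, Ne.symm hc.1] at hw⟩

lemma mix_supp (v : V) (f : CliqueComplex G) (h : f ∈ star G v) (t : I) :
    ((mix v f h t).1.support : Set V) ⊆ insert v (f.1.support : Set V) := by
  classical
  intro w hw
  by_contra hc
  simp only [Set.mem_insert_iff, not_or, Finset.mem_coe, Finsupp.mem_support_iff, not_not] at hc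
  simp [mix, hc.2, Ne.symm hc.1] at hw

lemma mix_mem (u v : V) (f : CliqueComplex G) (h : f ∈ star G v)
    (hu : G.IsClique (insert u (insert v (f.1.support : Set V)))) (t : I) :
    mix v f h t ∈ star G u :=
  Set.Pairwise.mono (Set.insert_subset_insert (mix_supp v f h t)) hu

lemma mix_mem_self (v : V) (f : CliqueComplex G) (h : f ∈ star G v) (t : I) :
    mix v f h t ∈ star G v :=
  mix_mem v v f h (by rw [Set.insert_idem]; exact h) t

lemma vtx_mem_star (v : V) : vtx G v ∈ star G v := by
  show G.IsClique (insert v ((vtx G v).1.support : Set V))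
  rw [supp_vtx, Set.insert_eq_of_mem (Set.mem_singleton v)]
  exact Set.pairwise_singleton v G.Adj

lemma mix_zero (v : V) (f : CliqueComplex G) (h : f ∈ star G v) : mix v f h 0 = vtx G v := by
  apply Subtype.ext; simp [mix, vtx]

lemma mix_one (v : V) (f : CliqueComplex G) (h : f ∈ star G v) : mix v f h 1 = f := by
  apply Subtype.ext; simp [mix]

lemma continuous_coord (v : V) : Continuous (fun f : CliqueComplex G => f.1 v) :=
  (continuous_apply v).comp (continuous_induced_dom (f := fun f : CliqueComplex G => (f.1 : V → ℝ)))

lemma continuous_of_coord {Y : Type*} [TopologicalSpace Y] {F : Y → CliqueComplex G}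
    (h : ∀ v, Continuous fun y => (F y).1 v) : Continuous F :=
  continuous_induced_rng.2 (continuous_pi h)

lemma continuous_mix (v : V) :
    Continuous fun p : I × star G v => mix v p.2.1 p.2.2 p.1 := by
  apply continuous_of_coord
  intro w
  have h1 : Continuous fun p : I × star G v => (p.2.1).1 w :=
    (continuous_coord w).comp (continuous_subtype_val.comp continuous_snd)
  have h2 : Continuous fun p : I × star G v => (p.1 : ℝ) :=
    continuous_subtype_val.comp continuous_fst
  exact (h2.mul h1).add ((continuous_const.sub h2).mul continuous_const)

instance contr (v : V) : ContractibleSpace (star G v) := by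
  rw [contractible_iff_id_nullhomotopic]
  refine ⟨⟨vtx G v, vtx_mem_star v⟩, ContinuousMap.Homotopic.symm ⟨?_⟩⟩
  exact
    { toFun := fun p => ⟨mix v p.2.1 p.2.2 p.1, mix_mem_self _ _ _ _⟩
      continuous_toFun := (continuous_mix v).subtype_mk _
      map_zero_left := fun x => Subtype.ext (mix_zero v x.1 x.2)
      map_one_left := fun x => Subtype.ext (mix_one v x.1 x.2) }

/-- Two paths in a closed star with the same ends are homotopic. -/
lemma star_homotopic (v : V) {x y : CliqueComplex G} (p q : Path x y)
    (hp : ∀ t, p t ∈ star G v) (hq : ∀ t, q t ∈ star G v) :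
    Path.Homotopic.Quotient.mk p = Path.Homotopic.Quotient.mk q := by
  rw [Path.Homotopic.Quotient.eq]
  have hx : x ∈ star G v := by simpa using hp 0
  have hy : y ∈ star G v := by simpa using hp 1
  let p' : Path (⟨x, hx⟩ : star G v) ⟨y, hy⟩ :=
    { toFun := fun t => ⟨p t, hp t⟩
      continuous_toFun := p.continuous.subtype_mk _
      source' := by simp
      target' := by simp }
  let q' : Path (⟨x, hx⟩ : star G v) ⟨y, hy⟩ :=
    { toFun := fun t => ⟨q t, hq t⟩
      continuous_toFun := q.continuous.subtype_mk _
      source' := by simp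
      target' := by simp }
  exact (SimplyConnectedSpace.paths_homotopic p' q').map ⟨Subtype.val, continuous_subtype_val⟩

lemma trans_mem {x y z : CliqueComplex G} {p : Path x y} {q : Path y z} {S : Set (CliqueComplex G)}
    (hp : ∀ t, p t ∈ S) (hq : ∀ t, q t ∈ S) (t : I) : (p.trans q) t ∈ S := by
  have : (p.trans q) t ∈ Set.range p ∪ Set.range q := by
    rw [← Path.trans_range]; exact ⟨t, rfl⟩
  rcases this with ⟨s, hs⟩ | ⟨s, hs⟩
  · rw [← hs]; exact hp s
  · rw [← hs]; exact hq s

lemma continuous_mix_right (v : V) (f : CliqueComplex G) (h : f ∈ star G v) :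
    Continuous (mix v f h) := by
  apply continuous_of_coord
  intro w
  have h2 : Continuous fun t : I => (t : ℝ) := continuous_subtype_val
  exact (h2.mul continuous_const).add ((continuous_const.sub h2).mul continuous_const)

/-- The straight path. -/
noncomputable def seg (v : V) (f : CliqueComplex G) (h : f ∈ star G v) : Path (vtx G v) f where
  toFun := mix v f h
  continuous_toFun := continuous_mix_right v f h
  source' := mix_zero _ _ _
  target' := mix_one _ _ _

lemma adj_mem {v w : V} (h : G.Adj v w) : vtx G w ∈ star G v := by
  show G.IsClique (insert v ((vtx G w).1.support : Set V))
  rw [supp_vtx]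
  rw [SimpleGraph.isClique_pair]
  exact fun _ => h

lemma seg_mem (u v : V) (f : CliqueComplex G) (h : f ∈ star G v)
    (hu : G.IsClique (insert u (insert v (f.1.support : Set V)))) (t : I) :
    seg v f h t ∈ star G u := mix_mem u v f h hu t

lemma seg_mem_self (v : V) (f : CliqueComplex G) (h : f ∈ star G v) (t : I) :
    seg v f h t ∈ star G v := mix_mem_self v f h t

/-- The edge path. -/
noncomputable def edge {v w : V} (h : G.Adj v w) : Path (vtx G v) (vtx G w) :=
  seg v _ (adj_mem h)

/-- The class of the edge path. -/
noncomputable def E {v w : V} (h : G.Adj v w) :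
    Path.Homotopic.Quotient (vtx G v) (vtx G w) := Path.Homotopic.Quotient.mk (edge h)

lemma edge_mem {u v w : V} (h : G.Adj v w) (hv : u = v ∨ G.Adj u v) (hw : u = w ∨ G.Adj u w)
    (t : I) : edge h t ∈ star G u := by
  refine seg_mem u v _ _ ?_ t
  rw [supp_vtx]
  rw [SimpleGraph.isClique_iff]
  intro a ha b hb hab
  simp only [Set.mem_insert_iff, Set.mem_singleton_iff] at ha hb
  have := h.symm
  have := fun k : G.Adj u v => k.symm
  have := fun k : G.Adj u w => k.symm
  rcases ha with rfl | rfl | rfl <;> rcases hb with rfl | rfl | rfl <;> tauto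

/-- A two-step path class. -/
noncomputable def E2 {a b d : V} (h : G.Adj a b) (h' : G.Adj b d) :
    Path.Homotopic.Quotient (vtx G a) (vtx G d) := (E h).trans (E h')

lemma E2_cone {a b b' d y : V} (h : G.Adj a b) (h' : G.Adj b d) (k : G.Adj a b') (k' : G.Adj b' d)
    (ya : y = a ∨ G.Adj y a) (yb : y = b ∨ G.Adj y b) (yb' : y = b' ∨ G.Adj y b')
    (yd : y = d ∨ G.Adj y d) : E2 h h' = E2 k k' :=
  star_homotopic y ((edge h).trans (edge h')) ((edge k).trans (edge k'))
    (trans_mem (edge_mem h ya yb) (edge_mem h' yb yd))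
    (trans_mem (edge_mem k ya yb') (edge_mem k' yb' yd))

lemma E2_tri {a b d : V} (h : G.Adj a b) (h' : G.Adj b d) (k : G.Adj a d) :
    (E h).trans (E h') = E k :=
  star_homotopic a ((edge h).trans (edge h')) (edge k)
    (trans_mem (edge_mem h (.inl rfl) (.inr h)) (edge_mem h' (.inr h) (.inr k)))
    (edge_mem k (.inl rfl) (.inr k))

/-- The combinatorial core for squares. -/
lemma square {n : ℕ} (hn : 3 ≤ n) (c : V → Fin n)
    (hcolor : ∀ v w, G.Adj v w → c v ≠ c w)
    (h4 : ∀ i : Fin n, ∀ p q r s : V, c p ≠ i → c q ≠ i → c r ≠ i → c s ≠ i →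
      ∃ y, c y = i ∧ G.Adj y p ∧ G.Adj y q ∧ G.Adj y r ∧ G.Adj y s)
    {a b b' d : V} (h : G.Adj a b) (h' : G.Adj b d) (k : G.Adj a b') (k' : G.Adj b' d) :
    E2 h h' = E2 k k' := by
  by_cases hb : c b = c b'
  · by_cases ha : c a = c d
    · obtain ⟨i, hi⟩ : ∃ i : Fin n, i ∉ ({c a, c b} : Finset (Fin n)) := by
        by_contra! hall
        have h1 : (Finset.univ : Finset (Fin n)) ⊆ {c a, c b} := fun i _ => hall i
        have h2 := Finset.card_le_card h1
        have h3 := Finset.card_le_two (a := c a) (b := c b)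
        simp at h2; omega
      simp only [Finset.mem_insert, Finset.mem_singleton, not_or] at hi
      obtain ⟨y, -, y1, y2, y3, y4⟩ := h4 i a b b' d (Ne.symm hi.1) (Ne.symm hi.2)
        (hb ▸ Ne.symm hi.2) (ha ▸ Ne.symm hi.1)
      exact E2_cone h h' k k' (.inr y1) (.inr y2) (.inr y3) (.inr y4)
    · obtain ⟨x, hx, x1, x2, x3, -⟩ := h4 (c d) a b b' b' ha (hcolor _ _ h') (hcolor _ _ k')
        (hcolor _ _ k')
      obtain ⟨y, -, y1, y2, y3, y4⟩ := h4 (c a) b d b' x (hcolor _ _ h).symm (Ne.symm ha)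
        (hcolor _ _ k).symm (hcolor _ _ x1)
      have e1 : E2 x2 h' = E2 x3 k' := E2_cone _ _ _ _ (.inr y4) (.inr y1) (.inr y3) (.inr y2)
      unfold E2 at e1 ⊢
      rw [← E2_tri x1.symm x2 h, ← E2_tri x1.symm x3 k, Path.Homotopic.Quotient.trans_assoc,
        Path.Homotopic.Quotient.trans_assoc, e1]
  · obtain ⟨x, hx, x1, x2, x3, -⟩ := h4 (c b') a b d d (hcolor _ _ k) hb (hcolor _ _ k').symm
      (hcolor _ _ k').symm
    obtain ⟨y, -, y1, y2, y3, y4⟩ := h4 (c b) a d b' x (hcolor _ _ h) (hcolor _ _ h').symm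
      (Ne.symm hb) (hcolor _ _ x2)
    rw [E2_cone h h' x1.symm x3 (.inr x1) (.inr x2) (.inl rfl) (.inr x3)]
    exact E2_cone _ _ _ _ (.inr y1) (.inr y4) (.inr y3) (.inr y2)

lemma exists_supp (x : CliqueComplex G) : ∃ v, x.1 v ≠ 0 := by
  by_contra! h
  have := x.2.2.1
  have h0 : x.1 = 0 := Finsupp.ext h
  rw [h0] at this
  simp at this

lemma mem_star_of_ne {x : CliqueComplex G} {v : V} (h : x.1 v ≠ 0) : x ∈ star G v := by
  have : insert v (x.1.support : Set V) = x.1.support :=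
    Set.insert_eq_of_mem (by simpa using h)
  show G.IsClique (insert v (x.1.support : Set V))
  rw [this]
  exact x.2.2.2

/-- The topological core. -/
lemma simply_of_phi (a : V) (φ : ∀ v, Path.Homotopic.Quotient (vtx G a) (vtx G v))
    (hφ : ∀ v w (h : G.Adj v w), (φ v).trans (E h) = φ w) :
    SimplyConnectedSpace (CliqueComplex G) := by
  choose s hs using exists_supp (G := G)
  let Φ : ∀ x, Path.Homotopic.Quotient (vtx G a) x := fun x =>
    (φ (s x)).trans (Path.Homotopic.Quotient.mk (seg (s x) x (mem_star_of_ne (hs x))))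
  have hΦ : ∀ x v (hv : x.1 v ≠ 0),
      Φ x = (φ v).trans (Path.Homotopic.Quotient.mk (seg v x (mem_star_of_ne hv))) := by
    intro x v hv
    by_cases hvs : s x = v
    · subst hvs; rfl
    · have hadj : G.Adj v (s x) :=
        x.2.2.2 (by simpa using hv) (by simpa using hs x) (Ne.symm hvs)
      have e1 : (E hadj).trans (Path.Homotopic.Quotient.mk (seg (s x) x (mem_star_of_ne (hs x))))
          = Path.Homotopic.Quotient.mk (seg v x (mem_star_of_ne hv)) := by
        refine star_homotopic v ((edge hadj).trans (seg (s x) x _)) _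
          (trans_mem (edge_mem hadj (.inl rfl) (.inr hadj)) ?_) (seg_mem_self _ _ _)
        refine seg_mem v (s x) x _ ?_
        rw [Set.insert_eq_of_mem (a := s x) (by simpa using hs x)]
        exact mem_star_of_ne hv
      show (φ (s x)).trans _ = _
      rw [← hφ v (s x) hadj, Path.Homotopic.Quotient.trans_assoc, e1]
  have hstep : ∀ v (x y : CliqueComplex G) (γ : Path x y), (∀ t, (γ t).1 v ≠ 0) →
      (Φ x).trans (Path.Homotopic.Quotient.mk γ) = Φ y := by
    intro v x y γ hγ
    have hx : x.1 v ≠ 0 := by simpa using hγ 0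
    have hy : y.1 v ≠ 0 := by simpa using hγ 1
    rw [hΦ x v hx, hΦ y v hy, Path.Homotopic.Quotient.trans_assoc,
      ← Path.Homotopic.Quotient.mk_trans]
    congr 1
    exact star_homotopic v _ _ (trans_mem (seg_mem_self _ _ _) (fun t => mem_star_of_ne (hγ t)))
      (seg_mem_self _ _ _)
  have hcast : ∀ (x y x' y' : CliqueComplex G) (γ : Path x y) (hx : x' = x) (hy : y' = y),
      (Φ x').trans (Path.Homotopic.Quotient.mk (γ.cast hx hy)) = Φ y' →
      (Φ x).trans (Path.Homotopic.Quotient.mk γ) = Φ y := by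
    intro x y x' y' γ hx hy h
    subst hx hy
    exact h
  have hall : ∀ (x y : CliqueComplex G) (γ : Path x y),
      (Φ x).trans (Path.Homotopic.Quotient.mk γ) = Φ y := by
    intro x y γ
    obtain ⟨t, t0, tm, ⟨n, hn⟩, ht⟩ := exists_monotone_Icc_subset_open_cover_unitInterval
      (c := fun v : V => {r : I | (γ r).1 v ≠ 0})
      (fun v => isOpen_ne.preimage ((continuous_coord v).comp γ.continuous))
      (fun r _ => Set.mem_iUnion.2 ⟨s (γ r), hs _⟩)
    have key : ∀ m, (Φ (γ (t 0))).trans (Path.Homotopic.Quotient.mk (γ.subpath (t 0) (t m)))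
        = Φ (γ (t m)) := by
      intro m
      induction m with
      | zero => rw [Path.subpath_self, Path.Homotopic.Quotient.mk_refl,
          Path.Homotopic.Quotient.trans_refl]
      | succ m ih =>
        rw [← Path.Homotopic.Quotient.eq.2 ⟨Path.Homotopy.subpathTransSubpath γ (t 0) (t m)
          (t (m + 1))⟩, Path.Homotopic.Quotient.mk_trans, ← Path.Homotopic.Quotient.trans_assoc, ih]
        obtain ⟨v, hv⟩ := ht m
        apply hstep v
        intro r
        have : (γ.subpath (t m) (t (m + 1))) r ∈ γ '' Set.Icc (t m) (t (m + 1)) := by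
          rw [← Path.range_subpath_of_le γ _ _ (tm (Nat.le_succ m))]
          exact ⟨r, rfl⟩
        obtain ⟨r', hr', e⟩ := this
        rw [← e]
        exact hv hr'
    have k := key n
    rw [t0, hn n le_rfl, Path.subpath_zero_one] at k
    exact hcast _ _ _ _ _ _ _ k
  rw [simply_connected_iff_paths_homotopic']
  refine ⟨⟨⟨vtx G a⟩, fun x y => ?_⟩, ?_⟩
  · exact ⟨(Quotient.out (Φ x)).symm.trans (Quotient.out (Φ y))⟩
  · intro x y p q
    rw [← Path.Homotopic.Quotient.eq]
    have := (hall x y p).trans (hall x y q).symm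
    have := congrArg (fun z => (Φ x).symm.trans z) this
    simpa only [← Path.Homotopic.Quotient.trans_assoc, Path.Homotopic.Quotient.symm_trans,
      Path.Homotopic.Quotient.refl_trans] using this

end CliqueComplex

open CliqueComplex

/-- Let `Γ` be an `n`-colored graph (coloring `c : V → Fin n`, no edges
within a color class) such that (1) every color class has at least two vertices, and
(2) for every color `i` and every choice of `2(n−1)` vertices outside the `i`-th color class
there are two distinct vertices of color `i` adjacent to all of them. If `n ≥ 3`, then the
clique complex `K(Γ)` is simply connected. -/
theorem stmt_15 {V : Type*} (n : ℕ) (hn : 3 ≤ n) (G : SimpleGraph V) (c : V → Fin n)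
    (hcolor : ∀ v w, G.Adj v w → c v ≠ c w)
    (h1 : ∀ i : Fin n, ∃ v w : V, v ≠ w ∧ c v = i ∧ c w = i)
    (h2 : ∀ i : Fin n, ∀ vs : Fin (2 * (n - 1)) → V, (∀ j, c (vs j) ≠ i) →
      ∃ v w : V, v ≠ w ∧ c v = i ∧ c w = i ∧ ∀ j, G.Adj v (vs j) ∧ G.Adj w (vs j)) :
    SimplyConnectedSpace (CliqueComplex G) := by
  have h4 : ∀ i : Fin n, ∀ p q r s : V, c p ≠ i → c q ≠ i → c r ≠ i → c s ≠ i →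
      ∃ y, c y = i ∧ G.Adj y p ∧ G.Adj y q ∧ G.Adj y r ∧ G.Adj y s := by
    intro i p q r s hp hq hr hs
    obtain ⟨v, w, -, hv, -, hadj⟩ := h2 i
      (fun j => if j.1 = 0 then p else if j.1 = 1 then q else if j.1 = 2 then r else s)
      (by intro j; split_ifs <;> assumption)
    refine ⟨v, hv, ?_, ?_, ?_, ?_⟩
    · simpa using (hadj ⟨0, by omega⟩).1
    · simpa using (hadj ⟨1, by omega⟩).1
    · simpa using (hadj ⟨2, by omega⟩).1
    · simpa using (hadj ⟨3, by omega⟩).1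
  have h3 : ∀ i j : Fin n, ∃ k, k ≠ i ∧ k ≠ j := by
    intro i j
    by_contra! hall
    have e1 : (Finset.univ : Finset (Fin n)) ⊆ {i, j} := fun k _ => by
      simp only [Finset.mem_insert, Finset.mem_singleton]
      by_cases hk : k = i
      · exact .inl hk
      · exact .inr (hall k hk)
    have e2 := Finset.card_le_card e1
    have e3 := Finset.card_le_two (a := i) (b := j)
    simp at e2; omega
  obtain ⟨a, -⟩ := h1 ⟨0, by omega⟩
  have hmid : ∀ v, ∃ u, G.Adj a u ∧ G.Adj u v := by
    intro v
    obtain ⟨i, hi, hj⟩ := h3 (c a) (c v)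
    obtain ⟨y, -, y1, y2, -⟩ := h4 i a v v v hi.symm hj.symm hj.symm hj.symm
    exact ⟨y, y1.symm, y2⟩
  choose m hm hm' using hmid
  have sq := fun {a b b' d : V} => square (G := G) hn c hcolor h4 (a := a) (b := b) (b' := b') (d := d)
  refine simply_of_phi a (fun v => E2 (hm v) (hm' v)) ?_
  intro v w h
  by_cases hc : c a = c v ∨ c a = c w
  · obtain ⟨i, hi, hj⟩ := h3 (c v) (c w)
    have ha : c a ≠ i := by
      rcases hc with hc | hc <;> rw [hc] <;> exact Ne.symm ‹_›
    obtain ⟨y, -, y1, y2, y3, -⟩ := h4 i a v w w ha hi.symm hj.symm hj.symm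
    rw [sq (hm v) (hm' v) y1.symm y2, sq (hm w) (hm' w) y1.symm y3]
    unfold E2
    rw [Path.Homotopic.Quotient.trans_assoc, E2_tri y2 h y3]
  · push Not at hc
    obtain ⟨u, hu, u1, u2, -⟩ := h4 (c w) a v v v hc.2 (hcolor _ _ h) (hcolor _ _ h) (hcolor _ _ h)
    obtain ⟨u', hu', w1, w2, w3, -⟩ := h4 (c v) a w u u hc.1 (hcolor _ _ h).symm
      (hcolor _ _ u2) (hcolor _ _ u2)
    rw [sq (hm v) (hm' v) u1.symm u2, sq (hm w) (hm' w) w1.symm w2]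
    have e := sq u2 h w3.symm w2
    unfold E2 at e ⊢
    rw [Path.Homotopic.Quotient.trans_assoc, e, ← Path.Homotopic.Quotient.trans_assoc,
      E2_tri u1.symm w3.symm w1.symm]
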